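/- arXiv:1506.08980 — 4 statements merged into one kernel-verified Lean document; each statement's English description precedes it below -/
import Mathlib

section
/- Let X be an N-compact zero-dimensional space with Banaschewski compactification bX. Then a function f ∈ C_c(X) has compact support if and only if every point p ∈ bX ∖ X lies in the closure (taken in bX) of Z(f); that is, C_c^K(X) = M_c^{bX∖X}, so the set of functions in C_c(X) with compact support equals the intersection of all free maximal ideals of C_c(X). -/
/-!
If the support of `f` is compact, its image in `B` is closed and misses `B ∖ X`. As `Z(f)` and the
support cover the dense set `X`, each point of `B ∖ X` lies in `cl_B Z(f)`.

Conversely, suppose `B ∖ X ⊆ cl_B Z(f)`. A clopen subset of `X` disjoint from `Z(f)` is the trace of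
a clopen subset `K` of `B`; as `K` misses `cl_B Z(f)`, it lies inside `X`, so the trace is compact.
A continuous `n : X → ℕ` takes all its values on the cozero set already on some clopen part of that
set (choose a small clopen set for each value and glue along the fibres of `n`), so it is bounded
there. For the coordinates of a closed embedding into `ℕ^ι` this puts the cozero set inside the
preimage of a product of finite sets, which is compact.
-/

open Set TopologicalSpace

universe u v

open Topology

section ZeroDimensional

theorem isTopologicalBasis_isClopen_pi {ι : Type*} {Y : ι → Type*} [∀ i, TopologicalSpace (Y i)]
    (hY : ∀ i, IsTopologicalBasis {s : Set (Y i) | IsClopen s}) :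
    IsTopologicalBasis {s : Set (∀ i, Y i) | IsClopen s} := by
  refine (isTopologicalBasis_pi hY).of_isOpen_of_subset (fun _ hs => hs.isOpen) ?_
  rintro _ ⟨U, F, hU, rfl⟩
  rw [pi_def]
  exact isClopen_biInter_finset fun i hi => (hU i hi).preimage (continuous_apply i)

theorem isTopologicalBasis_isClopen_of_isInducing {X Y : Type*} [TopologicalSpace X]
    [TopologicalSpace Y] {e : X → Y} (he : IsInducing e)
    (hY : IsTopologicalBasis {s : Set Y | IsClopen s}) :
    IsTopologicalBasis {s : Set X | IsClopen s} :=
  (hY.isInducing he).of_isOpen_of_subset (fun _ hs => hs.isOpen)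
    (image_subset_iff.2 fun _ hs => hs.preimage he.continuous)

theorem isTopologicalBasis_isClopen_of_discreteTopology {D : Type*} [TopologicalSpace D]
    [DiscreteTopology D] : IsTopologicalBasis {s : Set D | IsClopen s} :=
  (isTopologicalBasis_singletons D).of_isOpen_of_subset (fun _ hs => hs.isOpen)
    fun s _ => isClopen_discrete s

end ZeroDimensional

section ClopenSubsets

variable {X D : Type*} [TopologicalSpace X] [TopologicalSpace D] [DiscreteTopology D] {n : X → D}

theorem isOpen_setOf_mem_apply (hn : Continuous n) {U : D → Set X} (hU : ∀ d, IsOpen (U d)) :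
    IsOpen {x | x ∈ U (n x)} := by
  have eq_iUnion : {x | x ∈ U (n x)} = ⋃ d, n ⁻¹' {d} ∩ U d := by ext x; simp
  rw [eq_iUnion]
  exact isOpen_iUnion fun d => ((isOpen_discrete {d}).preimage hn).inter (hU d)

theorem isClopen_setOf_mem_apply (hn : Continuous n) {U : D → Set X} (hU : ∀ d, IsClopen (U d)) :
    IsClopen {x | x ∈ U (n x)} :=
  ⟨⟨isOpen_setOf_mem_apply hn fun d => (hU d).compl.isOpen⟩,
    isOpen_setOf_mem_apply hn fun d => (hU d).isOpen⟩

theorem exists_isClopen_subset_image_eq (hX : IsTopologicalBasis {s : Set X | IsClopen s})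
    (hn : Continuous n) {W : Set X} (hW : IsOpen W) :
    ∃ C ⊆ W, IsClopen C ∧ n '' C = n '' W := by
  have exists_fibrewise : ∀ d, ∃ U ⊆ W, IsClopen U ∧ (d ∈ n '' W → d ∈ n '' U) := by
    intro d
    by_cases hd : d ∈ n '' W
    · obtain ⟨x, hxW, hxd⟩ := hd
      obtain ⟨U, hU, hxU, hUW⟩ := hX.exists_subset_of_mem_open hxW hW
      exact ⟨U, hUW, hU, fun _ => ⟨x, hxU, hxd⟩⟩
    · exact ⟨∅, empty_subset W, isClopen_empty, fun h => absurd h hd⟩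
  choose U hUW hU hUn using exists_fibrewise
  have glued_subset : {x | x ∈ U (n x)} ⊆ W := fun x hx => hUW (n x) hx
  refine ⟨_, glued_subset, isClopen_setOf_mem_apply hn hU,
    (image_mono glued_subset).antisymm fun d hd => ?_⟩
  obtain ⟨x, hx, rfl⟩ := hUn d hd
  exact ⟨x, hx, rfl⟩

theorem finite_image_of_forall_isClopen_isCompact
    (hX : IsTopologicalBasis {s : Set X | IsClopen s}) (hn : Continuous n) {W : Set X}
    (hW : IsOpen W) (hWc : ∀ C ⊆ W, IsClopen C → IsCompact C) : (n '' W).Finite := by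
  obtain ⟨C, hCW, hC, hnC⟩ := exists_isClopen_subset_image_eq hX hn hW
  exact hnC ▸ ((hWc C hCW hC).image hn).finite_of_discrete

end ClopenSubsets

section ClosedEmbedding

variable {X ι : Type*} [TopologicalSpace X]

theorem isCompact_closure_of_forall_isCompact_image {Y : ι → Type*}
    [∀ i, TopologicalSpace (Y i)] [∀ i, T2Space (Y i)] {e : X → ∀ i, Y i}
    (he : IsClosedEmbedding e) {W : Set X} (hW : ∀ i, IsCompact ((e · i) '' W)) :
    IsCompact (closure W) := by
  have : T2Space X := he.isEmbedding.t2Space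
  exact (he.isCompact_preimage (isCompact_univ_pi hW)).closure_of_subset
    fun x hx i _ => ⟨x, hx, rfl⟩

theorem isCompact_closure_of_forall_isClopen_isCompact {D : ι → Type*}
    [∀ i, TopologicalSpace (D i)] [∀ i, DiscreteTopology (D i)] {e : X → ∀ i, D i}
    (he : IsClosedEmbedding e) {W : Set X} (hW : IsOpen W)
    (hWc : ∀ C ⊆ W, IsClopen C → IsCompact C) : IsCompact (closure W) := by
  have hX : IsTopologicalBasis {s : Set X | IsClopen s} :=
    isTopologicalBasis_isClopen_of_isInducing he.isInducing
      (isTopologicalBasis_isClopen_pi fun _ => isTopologicalBasis_isClopen_of_discreteTopology)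
  refine isCompact_closure_of_forall_isCompact_image he fun i => Finite.isCompact ?_
  exact finite_image_of_forall_isClopen_isCompact hX
    ((continuous_apply i).comp he.continuous) hW hWc

end ClosedEmbedding

section Compactification

variable {X B : Type*} [TopologicalSpace X] [TopologicalSpace B] {j : X → B}

theorem compl_range_subset_closure_image [T2Space B] (hj : Continuous j) (hd : DenseRange j)
    {Z : Set X} (hK : IsCompact (closure Zᶜ)) : (range j)ᶜ ⊆ closure (j '' Z) := by
  intro p hp
  have range_subset : range j ⊆ j '' Z ∪ j '' closure Zᶜ := by
    rw [← image_union, ← image_univ, ← union_compl_self Z]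
    gcongr
    exact subset_closure
  have hpc : p ∈ closure (j '' Z) ∪ j '' closure Zᶜ := by
    simpa only [closure_union, (hK.image hj).isClosed.closure_eq] using
      closure_mono range_subset (hd p)
  exact hpc.resolve_right fun h => hp (image_subset_range j _ h)

theorem exists_isClopen_preimage_eq
    (hext : ∀ g : X → Bool, Continuous g → ∃ G : B → Bool, Continuous G ∧ ∀ x, G (j x) = g x)
    {C : Set X} (hC : IsClopen C) : ∃ K : Set B, IsClopen K ∧ j ⁻¹' K = C := by
  obtain ⟨G, hG, hGC⟩ := hext C.boolIndicator ((continuous_boolIndicator_iff_isClopen C).2 hC)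
  refine ⟨G ⁻¹' {true}, (isClopen_discrete {true}).preimage hG, ?_⟩
  rw [← preimage_comp, show G ∘ j = C.boolIndicator from funext hGC, preimage_boolIndicator_true]

theorem isCompact_preimage_of_disjoint (hj : IsInducing j) {Z : Set X}
    (hZ : (range j)ᶜ ⊆ closure (j '' Z)) {K : Set B} (hKc : IsCompact K) (hKo : IsOpen K)
    (hKZ : Disjoint (j ⁻¹' K) Z) : IsCompact (j ⁻¹' K) := by
  have disjoint_closure : Disjoint K (closure (j '' Z)) :=
    (disjoint_image_right.2 hKZ).closure_right hKo
  exact hj.isCompact_preimage' hKc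
    (disjoint_compl_right_iff_subset.1 (disjoint_closure.mono_right hZ))

/-- The map `j` plays the role of the inclusion `X ⊆ B` and `Z` that of the zero-set `Z(f)`. -/
theorem stmt_8_general [CompactSpace B] [T2Space B] (hj : IsDenseInducing j)
    (hext : ∀ g : X → Bool, Continuous g → ∃ G : B → Bool, Continuous G ∧ ∀ x, G (j x) = g x)
    {ι : Type*} {D : ι → Type*} [∀ i, TopologicalSpace (D i)] [∀ i, DiscreteTopology (D i)]
    {e : X → ∀ i, D i} (he : IsClosedEmbedding e) {Z : Set X} (hZ : IsClosed Z) :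
    IsCompact (closure Zᶜ) ↔ (range j)ᶜ ⊆ closure (j '' Z) := by
  refine ⟨compl_range_subset_closure_image hj.continuous hj.dense, fun hcl =>
    isCompact_closure_of_forall_isClopen_isCompact he hZ.isOpen_compl fun C hCZ hC => ?_⟩
  obtain ⟨K, hK, rfl⟩ := exists_isClopen_preimage_eq hext hC
  exact isCompact_preimage_of_disjoint hj.isInducing hcl hK.isClosed.isCompact hK.isOpen
    (subset_compl_iff_disjoint_right.1 hCZ)

end Compactification

/-- If `X` is `ℕ`-compact (a closed subspace of some power of the discrete
space `ℕ`) and zero-dimensional with Banaschewski compactification `B`, then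
`f ∈ C_c(X)` has compact support iff every `p ∈ B ∖ X` lies in `cl_B Z(f)`;
that is, `C_c^K(X) = M_c^{B∖X}`, the intersection of all free maximal ideals of `C_c(X)`. -/
theorem stmt_8 {B : Type u} [TopologicalSpace B] [CompactSpace B] [T2Space B]
    (hB : IsTopologicalBasis {s : Set B | IsClopen s})
    (X : Set B) (hd : Dense X)
    (hext : ∀ g : X → Bool, Continuous g → ∃ G : B → Bool, Continuous G ∧ ∀ x : X, G x = g x)
    (hN : ∃ (ι : Type v) (e : X → (ι → ℕ)), Topology.IsClosedEmbedding e)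
    (f : X → ℝ) (hf : Continuous f) (hfc : (Set.range f).Countable) :
    IsCompact (closure {x : X | f x ≠ 0}) ↔
      ∀ p ∈ Xᶜ, p ∈ closure (Subtype.val '' (f ⁻¹' {0})) := by
  obtain ⟨ι, e, he⟩ := hN
  have support_iff := stmt_8_general hd.isDenseEmbedding_val.isDenseInducing hext he
    (isClosed_singleton.preimage hf : IsClosed (f ⁻¹' {0}))
  rw [Subtype.range_coe] at support_iff
  exact support_iff
end

section
/- Let X be a zero-dimensional space with Banaschewski compactification bX. Then X is pseudocompact if and only if υX = bX, i.e., if and only if for every point p ∈ bX and every sequence (V_n) of clopen neighborhoods of p in bX, the intersection (⋂_n V_n) ∩ X is nonempty. -/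
open Set TopologicalSpace

/-- The copy of the `ℕ`-compactification `υ₀X` inside the Banaschewski compactification:
points all of whose countable families of clopen neighborhoods have intersection meeting `X`. -/
def upsilon {B : Type*} [TopologicalSpace B] (X : Set B) : Set B :=
  {p | ∀ V : ℕ → Set B, (∀ n, IsClopen (V n) ∧ p ∈ V n) → ((⋂ n, V n) ∩ X).Nonempty}

/-!
Both sides are equivalent to the statement that every sequence of clopen subsets of `X` with the
finite intersection property has a common point in `X`.

If clopen sets `V n` have empty intersection, the first index `n` with `x ∉ V n` depends
continuously on `x`, so pseudocompactness bounds it and some finite intersection is empty.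
Conversely, if `f` is continuous and unbounded, nonempty clopen sets `U n ⊆ {n < |f|}` form a
locally finite family, so the tails `⋃ k ≥ n, U k` are clopen, nonempty and have no common point.

On the side of `υX`, clopen subsets of `X` are the traces of clopen subsets of the
compactification: compactness provides a point `p` in all of the extended sets, and density of `X`
shows that clopen neighborhoods of `p` have traces with the finite intersection property.
-/

/-- Pseudocompactness: every continuous real-valued function is bounded. No separation axiom is
included. -/
def IsPseudocompact (Y : Type*) [TopologicalSpace Y] : Prop :=
  ∀ f : Y → ℝ, Continuous f → ∃ M : ℝ, ∀ y, |f y| ≤ M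

/-- Countable compactness tested on clopen sets: every sequence of clopen sets with the finite
intersection property has a common point. The finite intersections are those of the initial
segments, `dissipate V n = ⋂ k ≤ n, V k`. -/
def HasCountableClopenFIP (Y : Type*) [TopologicalSpace Y] : Prop :=
  ∀ V : ℕ → Set Y, (∀ n, IsClopen (V n)) → (∀ n, (dissipate V n).Nonempty) → (⋂ n, V n).Nonempty

section Topology

variable {Y : Type*} [TopologicalSpace Y]

lemma isClopen_dissipate {V : ℕ → Set Y} (hV : ∀ n, IsClopen (V n)) (n : ℕ) :
    IsClopen (dissipate V n) :=
  (finite_Iic n).isClopen_biInter fun k _ => hV k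

lemma isClopen_iUnion_of_locallyFinite {ι : Type*} {U : ι → Set Y} (hfin : LocallyFinite U)
    (hU : ∀ i, IsClopen (U i)) : IsClopen (⋃ i, U i) :=
  ⟨hfin.isClosed_iUnion fun i => (hU i).isClosed, isOpen_iUnion fun i => (hU i).isOpen⟩

lemma locallyFinite_of_natCast_lt {R : Type*} [Semiring R] [LinearOrder R]
    [IsStrictOrderedRing R] [Archimedean R] {f : Y → R} (hf : UpperSemicontinuous f)
    {U : ℕ → Set Y} (hU : ∀ n, ∀ y ∈ U n, (n : R) < f y) : LocallyFinite U := by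
  intro y
  obtain ⟨N, hN⟩ := exists_nat_gt (f y)
  refine ⟨{z | f z < N}, (hf.isOpen_preimage N).mem_nhds hN, (finite_lt_nat N).subset ?_⟩
  rintro n ⟨z, hzU, hzN⟩
  exact Nat.cast_lt.mp ((hU n z hzU).trans hzN)

lemma continuous_find_notMem {V : ℕ → Set Y} [∀ y, DecidablePred fun n => y ∉ V n]
    (hV : ∀ n, IsClopen (V n)) (hexit : ∀ y, ∃ n, y ∉ V n) :
    Continuous fun y => Nat.find (hexit y) := by
  refine OrderTopology.continuous_iff.mpr fun n => ⟨?_, ?_⟩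
  · have hgt : (fun y => Nat.find (hexit y)) ⁻¹' Ioi n = dissipate V n := by
      ext y
      simp only [mem_preimage, mem_Ioi, Nat.lt_find_iff, not_not, mem_dissipate]
    exact hgt ▸ (isClopen_dissipate hV n).isOpen
  · have hlt : (fun y => Nat.find (hexit y)) ⁻¹' Iio n = ⋃ m < n, (V m)ᶜ := by
      ext y
      simp only [mem_preimage, mem_Iio, Nat.find_lt_iff, mem_iUnion, mem_compl_iff, exists_prop]
    exact hlt ▸ isOpen_biUnion fun m _ => (hV m).compl.isOpen

lemma isTopologicalBasis_isClopen_of_isInducing_s9 {Z : Type*} [TopologicalSpace Z]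
    (hZ : IsTopologicalBasis {s : Set Z | IsClopen s}) {i : Y → Z} (hi : Topology.IsInducing i) :
    IsTopologicalBasis {s : Set Y | IsClopen s} := by
  refine (hZ.isInducing hi).of_isOpen_of_subset (fun s hs => hs.isOpen) ?_
  rintro _ ⟨V, hV, rfl⟩
  exact hV.preimage hi.continuous

lemma exists_isClopen_preimage_eq_of_forall_bool_extend {B : Type*} [TopologicalSpace B]
    {i : Y → B}
    (hext : ∀ g : Y → Bool, Continuous g → ∃ G : B → Bool, Continuous G ∧ ∀ y, G (i y) = g y)
    {W : Set Y} (hW : IsClopen W) : ∃ V : Set B, IsClopen V ∧ i ⁻¹' V = W := by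
  obtain ⟨G, hG, hGi⟩ := hext W.boolIndicator ((continuous_boolIndicator_iff_isClopen W).mpr hW)
  refine ⟨G ⁻¹' {true}, (isClopen_discrete _).preimage hG, ?_⟩
  ext y
  rw [mem_preimage, mem_preimage, mem_singleton_iff, hGi, mem_iff_boolIndicator]

end Topology

section Pseudocompact

variable {Y : Type*} [TopologicalSpace Y]

theorem IsPseudocompact.hasCountableClopenFIP (hY : IsPseudocompact Y) :
    HasCountableClopenFIP Y := by
  classical
  intro V hV hfip
  by_contra hempty
  have hexit : ∀ y, ∃ n, y ∉ V n := by
    simpa only [Set.Nonempty, mem_iInter, not_exists, not_forall] using hempty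
  obtain ⟨M, hM⟩ := hY (fun y => (Nat.find (hexit y) : ℝ))
    (continuous_of_discreteTopology.comp (continuous_find_notMem hV hexit))
  obtain ⟨N, hN⟩ := exists_nat_gt M
  obtain ⟨y, hy⟩ := hfip N
  have hlate : N < Nat.find (hexit y) :=
    (Nat.lt_find_iff _ _).mpr fun k hk => not_not.mpr (mem_dissipate.mp hy k hk)
  have hbound : (Nat.find (hexit y) : ℝ) ≤ M := (le_abs_self _).trans (hM y)
  exact hlate.not_gt (Nat.cast_lt.mp (hbound.trans_lt hN))

theorem HasCountableClopenFIP.exists_eq_empty_of_locallyFinite (hY : HasCountableClopenFIP Y)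
    {U : ℕ → Set Y} (hfin : LocallyFinite U) (hU : ∀ n, IsClopen (U n)) : ∃ n, U n = ∅ := by
  by_contra! hne
  let tail (n : ℕ) : Set Y := ⋃ k : Ici n, U k
  have htail (n : ℕ) : IsClopen (tail n) :=
    isClopen_iUnion_of_locallyFinite (hfin.comp_injective Subtype.val_injective) fun k => hU k
  have hfip (n : ℕ) : (dissipate tail n).Nonempty := by
    obtain ⟨y, hy⟩ := hne n
    exact ⟨y, mem_dissipate.mpr fun k hk => mem_iUnion_of_mem ⟨n, hk⟩ hy⟩
  obtain ⟨y, hy⟩ := hY tail htail hfip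
  refine (hfin.point_finite y).not_infinite (Nat.frequently_atTop_iff_infinite.mp <|
    Filter.frequently_atTop.mpr fun n => ?_)
  obtain ⟨⟨k, hnk⟩, hyk⟩ := mem_iUnion.mp (mem_iInter.mp hy n)
  exact ⟨k, hnk, hyk⟩

theorem HasCountableClopenFIP.isPseudocompact (hY : HasCountableClopenFIP Y)
    (hbasis : IsTopologicalBasis {s : Set Y | IsClopen s}) : IsPseudocompact Y := by
  intro f hf
  by_contra! hunbounded
  have hclopen (n : ℕ) :
      ∃ U : Set Y, IsClopen U ∧ U.Nonempty ∧ ∀ y ∈ U, (n : ℝ) < |f y| := by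
    obtain ⟨x, hx⟩ := hunbounded n
    obtain ⟨U, hU, hxU, hlarge⟩ :=
      hbasis.exists_subset_of_mem_open hx (isOpen_lt continuous_const hf.abs)
    exact ⟨U, hU, ⟨x, hxU⟩, fun y hy => hlarge hy⟩
  choose U hU hne hlarge using hclopen
  have hfin : LocallyFinite U := locallyFinite_of_natCast_lt hf.abs.upperSemicontinuous hlarge
  obtain ⟨n, hn⟩ := hY.exists_eq_empty_of_locallyFinite hfin hU
  exact (hne n).ne_empty hn

theorem isPseudocompact_iff_hasCountableClopenFIP
    (hbasis : IsTopologicalBasis {s : Set Y | IsClopen s}) :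
    IsPseudocompact Y ↔ HasCountableClopenFIP Y :=
  ⟨fun hY => hY.hasCountableClopenFIP, fun hY => hY.isPseudocompact hbasis⟩

end Pseudocompact

section Upsilon

variable {B : Type*} [TopologicalSpace B] {X : Set B}

theorem HasCountableClopenFIP.upsilon_eq_univ (hX : HasCountableClopenFIP X) (hd : Dense X) :
    upsilon X = univ := by
  refine eq_univ_of_forall fun p V hV => ?_
  have hfip (n : ℕ) : (dissipate (fun k => ((↑) : X → B) ⁻¹' V k) n).Nonempty := by
    obtain ⟨x, hxV, hxX⟩ := hd.inter_open_nonempty (dissipate V n)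
      (isClopen_dissipate (fun k => (hV k).1) n).isOpen
      ⟨p, mem_dissipate.mpr fun k _ => (hV k).2⟩
    exact ⟨⟨x, hxX⟩, mem_dissipate.mpr fun k hk => mem_dissipate.mp hxV k hk⟩
  obtain ⟨x, hx⟩ := hX _ (fun n => (hV n).1.preimage continuous_subtype_val) hfip
  exact ⟨x, mem_iInter.mpr fun n => mem_iInter.mp hx n, x.2⟩

theorem hasCountableClopenFIP_of_upsilon_eq_univ [CompactSpace B]
    (hext : ∀ g : X → Bool, Continuous g → ∃ G : B → Bool, Continuous G ∧ ∀ x : X, G x = g x)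
    (hX : upsilon X = univ) : HasCountableClopenFIP X := by
  intro W hW hfip
  choose V hV hVW using fun n => exists_isClopen_preimage_eq_of_forall_bool_extend hext (hW n)
  have hmem (n : ℕ) (x : X) : (x : B) ∈ V n ↔ x ∈ W n := by rw [← hVW n, mem_preimage]
  have hfipV (n : ℕ) : (dissipate V n).Nonempty := by
    obtain ⟨x, hx⟩ := hfip n
    exact ⟨x, mem_dissipate.mpr fun k hk => (hmem k x).mpr (mem_dissipate.mp hx k hk)⟩
  have hclosed (n : ℕ) : IsClosed (dissipate V n) := (isClopen_dissipate hV n).isClosed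
  obtain ⟨p, hp⟩ : (⋂ n, V n).Nonempty := by
    rw [← iInter_dissipate]
    exact IsCompact.nonempty_iInter_of_sequence_nonempty_isCompact_isClosed _
      (fun n => antitone_dissipate n.le_succ) hfipV (hclosed 0).isCompact hclosed
  have hpX : p ∈ upsilon X := hX ▸ mem_univ p
  obtain ⟨x, hxV, hxX⟩ := hpX V fun n => ⟨hV n, mem_iInter.mp hp n⟩
  exact ⟨⟨x, hxX⟩, mem_iInter.mpr fun n => (hmem n ⟨x, hxX⟩).mp (mem_iInter.mp hxV n)⟩

end Upsilon

theorem stmt_9_general {B : Type*} [TopologicalSpace B] [CompactSpace B] (X : Set B)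
    (hX : IsTopologicalBasis {s : Set X | IsClopen s}) (hd : Dense X)
    (hext : ∀ g : X → Bool, Continuous g → ∃ G : B → Bool, Continuous G ∧ ∀ x : X, G x = g x) :
    (∀ f : X → ℝ, Continuous f → ∃ M : ℝ, ∀ x, |f x| ≤ M) ↔ upsilon X = Set.univ :=
  (isPseudocompact_iff_hasCountableClopenFIP hX).trans
    ⟨fun hfip => hfip.upsilon_eq_univ hd, hasCountableClopenFIP_of_upsilon_eq_univ hext⟩

/-- `X` is pseudocompact iff `υX = B`. -/
theorem stmt_9 {B : Type*} [TopologicalSpace B] [CompactSpace B] [T2Space B]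
    (hB : IsTopologicalBasis {s : Set B | IsClopen s})
    (X : Set B) (hd : Dense X)
    (hext : ∀ g : X → Bool, Continuous g → ∃ G : B → Bool, Continuous G ∧ ∀ x : X, G x = g x) :
    (∀ f : X → ℝ, Continuous f → ∃ M : ℝ, ∀ x, |f x| ≤ M) ↔ upsilon X = Set.univ :=
  stmt_9_general X (isTopologicalBasis_isClopen_of_isInducing_s9 hB .subtypeVal) hd hext
end

section
/- Let X be a zero-dimensional space which is not pseudocompact, with Banaschewski compactification bX, and let υX ⊆ bX be the copy of the N-compactification υ₀X of X inside bX. Then the remainder bX ∖ υX has cardinality at least 2^(2^ℵ₀). -/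
/-!
Clopen sets chosen inside `{n < |f|}`, for an unbounded continuous `f : X → ℝ`, form a locally
finite sequence; weighting the `n`-th one by `n` and summing gives an unbounded continuous function
`X → ℕ`, and after renumbering its values a continuous surjection `h : X → ℕ`.

Pick `x n ∈ X` with `h (x n) = n`, and for `A ⊆ ℕ` a clopen `K A ⊆ bX` with `K A ∩ X = h ⁻¹' A`. For
an ultrafilter `U` on `ℕ`, the limit `p` of `x` along `U` satisfies `p ∈ K A ↔ A ∈ U`, so `p`
determines `U`. If `U` is free, then `p` lies in all the clopen sets `K {k | n ≤ k}`, whose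
intersection misses `X`; hence `p ∉ υX`. Finally `ℕ` carries `2 ^ (2 ^ ℵ₀)` free ultrafilters,
because it carries an independent family of `2 ^ ℵ₀` sets.
-/

open Set TopologicalSpace

open Filter Topology Cardinal

section FreeUltrafilters

universe u

variable {α ι : Type*}

/-- The free (nonprincipal) ultrafilters on `α`, encoded as those containing all cofinite sets. -/
def freeUltrafilters (α : Type*) : Set (Ultrafilter α) :=
  {U | (U : Filter α) ≤ cofinite}

/-- A family of sets is independent if every finite intersection of members of the family and
complements of other members is infinite. Here `φ` records which of the sets indexed by `T` enter
the intersection uncomplemented. -/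
def IsIndependentFamily (A : ι → Set α) : Prop :=
  ∀ T : Set ι, T.Finite → ∀ φ : Set ι, {a | ∀ i ∈ T, a ∈ A i ↔ i ∈ φ}.Infinite

open scoped Classical in
theorem exists_finset_injOn_filter_mem_of_finite {T : Set (Set α)} (hT : T.Finite) :
    ∃ F : Finset α, InjOn (fun S : Set α => F.filter (· ∈ S)) T := by
  have separate (P : Set α × Set α) : ∃ F : Finset α,
      F.filter (· ∈ P.1) = F.filter (· ∈ P.2) → P.1 = P.2 := by
    by_cases hP : P.1 = P.2
    · exact ⟨∅, fun _ => hP⟩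
    · obtain ⟨a, ha⟩ := not_forall.1 (mt Set.ext hP)
      refine ⟨{a}, fun h => (ha ?_).elim⟩
      simpa using Finset.ext_iff.1 h a
  choose F hF using separate
  refine ⟨(hT.prod hT).toFinset.biUnion F, fun S hS S' hS' h => hF (S, S') ?_⟩
  have hsub : F (S, S') ⊆ (hT.prod hT).toFinset.biUnion F :=
    Finset.subset_biUnion_of_mem F (by simp [hS, hS'])
  ext a
  have := Finset.ext_iff.1 h a
  simp only [Finset.mem_filter] at this ⊢
  exact ⟨fun ha => ⟨ha.1, (this.1 ⟨hsub ha.1, ha.2⟩).2⟩,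
    fun ha => ⟨ha.1, (this.2 ⟨hsub ha.1, ha.2⟩).2⟩⟩

theorem nonempty_equiv_prod_finset_prod_finset_finset (α : Type*) [Infinite α] :
    Nonempty (α ≃ α × Finset α × Finset (Finset α)) := by
  rw [← Cardinal.eq]
  simp [mk_finset_of_infinite]

-- Hausdorff's construction: `a : α` codes a finite set `F` and a finite collection `𝓕` of finite
-- sets, each pair `(F, 𝓕)` having infinitely many codes, and `a ∈ A S` means `F ∩ S ∈ 𝓕`.
open scoped Classical in
theorem exists_isIndependentFamily (α : Type*) [Infinite α] :
    ∃ A : Set α → Set α, IsIndependentFamily A := by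
  obtain ⟨e⟩ := nonempty_equiv_prod_finset_prod_finset_finset α
  refine ⟨fun S => {a | (e a).2.1.filter (· ∈ S) ∈ (e a).2.2}, fun T hT φ => ?_⟩
  obtain ⟨F, hF⟩ := exists_finset_injOn_filter_mem_of_finite hT
  let trace (S : Set α) : Finset α := F.filter (· ∈ S)
  let 𝓕 : Finset (Finset α) := (hT.inter_of_left φ).toFinset.image trace
  have mem_𝓕 {S : Set α} (hS : S ∈ T) : trace S ∈ 𝓕 ↔ S ∈ φ := by
    have : 𝓕 = (trace '' (T ∩ φ) : Set (Finset α)) := by simp [𝓕]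
    rw [← Finset.mem_coe, this, hF.mem_image_iff inter_subset_left hS]
    exact and_iff_right hS
  have code_injective : Function.Injective fun a => e.symm (a, F, 𝓕) :=
    e.symm.injective.comp (Prod.mk_left_injective _)
  refine (infinite_range_of_injective code_injective).mono ?_
  rintro _ ⟨a, rfl⟩ S hS
  simpa only [mem_ofPred_eq, Equiv.apply_symm_apply] using mem_𝓕 hS

theorem IsIndependentFamily.exists_mem_freeUltrafilters {A : ι → Set α}
    (hA : IsIndependentFamily A) (φ : Set ι) :
    ∃ U ∈ freeUltrafilters α, ∀ i, A i ∈ U ↔ i ∈ φ := by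
  let l : Filter α := ⨅ i, 𝓟 {a | a ∈ A i ↔ i ∈ φ}
  have : (l ⊓ cofinite).NeBot := by
    refine ((hasBasis_iInf_principal_finite _).inf_neBot_iff).2 fun {T} hT s hs => ?_
    have hne : ({a | ∀ i ∈ T, a ∈ A i ↔ i ∈ φ} \ sᶜ).Nonempty := ((hA T hT φ).sdiff hs).nonempty
    simpa [inter_nonempty, Set.Nonempty] using hne
  let U := Ultrafilter.of (l ⊓ cofinite)
  have hU : (U : Filter α) ≤ l ⊓ cofinite := Ultrafilter.of_le _
  refine ⟨U, hU.trans inf_le_right, fun i => ?_⟩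
  have hi : ∀ᶠ a in (U : Filter α), a ∈ A i ↔ i ∈ φ :=
    (hU.trans inf_le_left).trans (iInf_le _ i) (mem_principal_self _)
  exact (eventually_congr hi).trans eventually_const

theorem two_pow_two_pow_mk_le_mk_freeUltrafilters (α : Type u) [Infinite α] :
    (2 : Cardinal.{u}) ^ ((2 : Cardinal.{u}) ^ #α) ≤ #(freeUltrafilters α) := by
  obtain ⟨A, hA⟩ := exists_isIndependentFamily α
  choose U hU hAU using hA.exists_mem_freeUltrafilters
  have hinj : Function.Injective fun φ => (⟨U φ, hU φ⟩ : freeUltrafilters α) := by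
    intro φ ψ h
    ext S
    have hUφψ : U φ = U ψ := congrArg Subtype.val h
    rw [← hAU φ S, ← hAU ψ S, hUφψ]
  simpa only [mk_set] using mk_le_of_injective hinj

end FreeUltrafilters

section ContinuousSurjectionOntoNat

variable {Y : Type*} [TopologicalSpace Y]

theorem locallyFinite_Ioi_natCast : LocallyFinite fun n : ℕ => Ioi (n : ℝ) := fun r => by
  refine ⟨Iio (r + 1), Iio_mem_nhds (lt_add_one r), (finite_Iic ⌈r + 1⌉₊).subset ?_⟩
  rintro n ⟨s, hns, hsr⟩
  have hn : (n : ℝ) < r + 1 := lt_trans (mem_Ioi.1 hns) (mem_Iio.1 hsr)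
  exact_mod_cast hn.le.trans (Nat.le_ceil _)

theorem exists_locallyFinite_isClopen (hY : IsTopologicalBasis {s : Set Y | IsClopen s})
    {f : Y → ℝ} (hf : Continuous f) (hunbdd : ∀ M : ℝ, ∃ y, M < |f y|) :
    ∃ C : ℕ → Set Y, LocallyFinite C ∧ ∀ n, IsClopen (C n) ∧ (C n).Nonempty := by
  have shrink (n : ℕ) : ∃ C ∈ {s : Set Y | IsClopen s}, C.Nonempty ∧ C ⊆ {y | (n : ℝ) < |f y|} :=
    hY.exists_nonempty_subset (hunbdd n) (isOpen_lt continuous_const hf.abs)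
  choose C hC hne hsub using shrink
  exact ⟨C, (locallyFinite_Ioi_natCast.preimage_continuous hf.abs).subset hsub,
    fun n => ⟨hC n, hne n⟩⟩

theorem exists_continuous_infinite_range_of_locallyFinite {C : ℕ → Set Y} (hfin : LocallyFinite C)
    (hC : ∀ n, IsClopen (C n)) (hne : ∀ n, (C n).Nonempty) :
    ∃ h : Y → ℕ, Continuous h ∧ (range h).Infinite := by
  let w (n : ℕ) : Y → ℕ := (C n).indicator fun _ => n
  have hsupp : LocallyFinite fun n => Function.support (w n) :=
    hfin.subset fun n => support_indicator_subset
  refine ⟨fun y => ∑ᶠ n, w n y,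
    continuous_finsum (fun n => (hC n).continuous_indicator continuous_const) hsupp, ?_⟩
  refine infinite_of_forall_exists_gt fun m => ?_
  obtain ⟨y, hy⟩ := hne (m + 1)
  refine ⟨_, mem_range_self y, Nat.lt_of_succ_le ?_⟩
  calc m + 1 = w (m + 1) y := (indicator_of_mem hy fun _ => m + 1).symm
    _ ≤ ∑ᶠ n, w n y := single_le_finsum _ (hsupp.point_finite y) fun _ => Nat.zero_le _

open scoped Classical in
theorem exists_continuous_surjective_nat_of_infinite_range {h : Y → ℕ} (hc : Continuous h)
    (hinf : (range h).Infinite) : ∃ g : Y → ℕ, Continuous g ∧ Function.Surjective g := by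
  have hcount : Continuous (Nat.count (· ∈ range h)) := continuous_of_discreteTopology
  refine ⟨_, hcount.comp hc, fun n => ?_⟩
  obtain ⟨y, hy⟩ := Nat.nth_mem_of_infinite hinf n
  exact ⟨y, (congrArg _ hy).trans (Nat.count_nth_of_infinite hinf n)⟩

theorem exists_continuous_surjective_nat_of_unbounded
    (hY : IsTopologicalBasis {s : Set Y | IsClopen s})
    {f : Y → ℝ} (hf : Continuous f) (hunbdd : ∀ M : ℝ, ∃ y, M < |f y|) :
    ∃ h : Y → ℕ, Continuous h ∧ Function.Surjective h := by
  obtain ⟨C, hfin, hC⟩ := exists_locallyFinite_isClopen hY hf hunbdd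
  obtain ⟨h, hc, hinf⟩ :=
    exists_continuous_infinite_range_of_locallyFinite hfin (fun n => (hC n).1) fun n => (hC n).2
  exact exists_continuous_surjective_nat_of_infinite_range hc hinf

end ContinuousSurjectionOntoNat

section Remainder

variable {B : Type*} [TopologicalSpace B] {X : Set B}

theorem isTopologicalBasis_isClopen_subtype (hB : IsTopologicalBasis {s : Set B | IsClopen s}) :
    IsTopologicalBasis {s : Set X | IsClopen s} := by
  refine (hB.induced ((↑) : X → B)).of_isOpen_of_subset (fun s hs => hs.isOpen) ?_
  rintro _ ⟨s, hs, rfl⟩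
  exact hs.preimage continuous_subtype_val

theorem exists_isClopen_preimage_val_eq
    (hext : ∀ g : X → Bool, Continuous g → ∃ G : B → Bool, Continuous G ∧ ∀ x : X, G x = g x)
    {C : Set X} (hC : IsClopen C) : ∃ K : Set B, IsClopen K ∧ ((↑) : X → B) ⁻¹' K = C := by
  obtain ⟨G, hG, hGC⟩ := hext C.boolIndicator ((continuous_boolIndicator_iff_isClopen C).2 hC)
  refine ⟨G ⁻¹' {true}, (isClopen_discrete _).preimage hG, ?_⟩
  ext x
  rw [mem_preimage, mem_preimage, mem_singleton_iff, hGC, mem_iff_boolIndicator]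

theorem mem_iff_eventually_mem_of_isClopen {ι : Type*} {l : Filter ι} [l.NeBot] {x : ι → B} {p : B}
    (hx : Tendsto x l (𝓝 p)) {K : Set B} (hK : IsClopen K) : p ∈ K ↔ ∀ᶠ i in l, x i ∈ K :=
  ⟨fun hp => hx (hK.isOpen.mem_nhds hp), hK.isClosed.mem_of_tendsto hx⟩

theorem exists_forall_mem_iff_mem_ultrafilter [CompactSpace B] {D : Type*} {x : D → B}
    {K : Set D → Set B} (hK : ∀ A, IsClopen (K A)) (hx : ∀ A, x ⁻¹' K A = A) (U : Ultrafilter D) :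
    ∃ p : B, ∀ A, p ∈ K A ↔ A ∈ U := by
  refine ⟨(U.map x).lim, fun A => ?_⟩
  have hlim : Tendsto x U (𝓝 (U.map x).lim) := (U.map x).le_nhds_lim
  calc (U.map x).lim ∈ K A ↔ x ⁻¹' K A ∈ U := mem_iff_eventually_mem_of_isClopen hlim (hK A)
    _ ↔ A ∈ U := by rw [hx]

theorem exists_injective_ultrafilter_notMem_upsilon [CompactSpace B]
    (hext : ∀ g : X → Bool, Continuous g → ∃ G : B → Bool, Continuous G ∧ ∀ x : X, G x = g x)
    {h : X → ℕ} (hc : Continuous h) (hsurj : Function.Surjective h) :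
    ∃ p : Ultrafilter ℕ → B, Function.Injective p ∧ ∀ U ∈ freeUltrafilters ℕ, p U ∉ upsilon X := by
  choose K hK hKX using fun A : Set ℕ =>
    exists_isClopen_preimage_val_eq hext ((isClopen_discrete A).preimage hc)
  have mem_K (A : Set ℕ) (y : X) : (y : B) ∈ K A ↔ h y ∈ A := Set.ext_iff.1 (hKX A) y
  choose x hx using hsurj
  choose p hp using exists_forall_mem_iff_mem_ultrafilter (x := fun n => (x n : B)) hK
    fun A => by ext n; rw [mem_preimage, mem_K, hx]
  refine ⟨p, fun U V hUV => Ultrafilter.ext fun A => ?_, fun U hU hpU => ?_⟩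
  · rw [← hp U, ← hp V, hUV]
  · have hmem (n : ℕ) : p U ∈ K (Ici n) :=
      (hp U _).2 (hU (Nat.cofinite_eq_atTop ▸ Ici_mem_atTop n))
    obtain ⟨y, hy, hyX⟩ := hpU (fun n => K (Ici n)) fun n => ⟨hK _, hmem n⟩
    have : h ⟨y, hyX⟩ + 1 ≤ h ⟨y, hyX⟩ := (mem_K _ ⟨y, hyX⟩).1 (mem_iInter.1 hy _)
    exact Nat.not_succ_le_self _ this

theorem stmt_12_general [CompactSpace B] (hX : IsTopologicalBasis {s : Set X | IsClopen s})
    (hext : ∀ g : X → Bool, Continuous g → ∃ G : B → Bool, Continuous G ∧ ∀ x : X, G x = g x)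
    (hnp : ¬ ∀ f : X → ℝ, Continuous f → ∃ M : ℝ, ∀ x, |f x| ≤ M) :
    (2 : Cardinal) ^ ((2 : Cardinal) ^ Cardinal.aleph0) ≤ Cardinal.mk ((upsilon X)ᶜ : Set B) := by
  push Not at hnp
  obtain ⟨f, hf, hunbdd⟩ := hnp
  obtain ⟨h, hc, hsurj⟩ := exists_continuous_surjective_nat_of_unbounded hX hf hunbdd
  obtain ⟨p, hp, hpX⟩ := exists_injective_ultrafilter_notMem_upsilon hext hc hsurj
  have hle : lift #(freeUltrafilters ℕ) ≤ lift #((upsilon X)ᶜ : Set B) :=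
    lift_mk_le_lift_mk_of_injective
      (f := fun U : freeUltrafilters ℕ => (⟨p U, hpX U U.2⟩ : ((upsilon X)ᶜ : Set B)))
      fun U V hUV => Subtype.ext (hp (congrArg Subtype.val hUV))
  simpa using (lift_le.2 (two_pow_two_pow_mk_le_mk_freeUltrafilters ℕ)).trans hle

end Remainder

/-- If the zero-dimensional space `X` is not pseudocompact, then the
remainder `B ∖ υX` of its Banaschewski compactification has at least `2 ^ (2 ^ ℵ₀)` points. -/
theorem stmt_12 {B : Type*} [TopologicalSpace B] [CompactSpace B] [T2Space B]
    (hB : IsTopologicalBasis {s : Set B | IsClopen s})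
    (X : Set B) (hd : Dense X)
    (hext : ∀ g : X → Bool, Continuous g → ∃ G : B → Bool, Continuous G ∧ ∀ x : X, G x = g x)
    (hnp : ¬ ∀ f : X → ℝ, Continuous f → ∃ M : ℝ, ∀ x, |f x| ≤ M) :
    (2 : Cardinal) ^ ((2 : Cardinal) ^ Cardinal.aleph0) ≤ Cardinal.mk ((upsilon X)ᶜ : Set B) :=
  stmt_12_general (isTopologicalBasis_isClopen_subtype hB) hext hnp
end

section
/- Let X be a zero-dimensional space which is not pseudocompact, with Banaschewski compactification bX, and let υX ⊆ bX be the copy of the N-compactification υ₀X of X inside bX. Consider the subspace R = bX ∖ υX. Then: (a) for no point p ∈ R is the singleton {p} the zero-set of a continuous real-valued function on R; (b) R has no isolated points; (c) no point of R has a countable neighborhood basis in R. -/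
/-!
If `p` lies outside `υX`, some continuous `k : X → ℕ` tends to infinity along `X` at `p`. If `p` had
a countable neighborhood basis in `B`, then `k` would tend to infinity along a sequence in `X`
converging to `p`, and the indicator of a suitable subset of `ℕ`, composed with `k`, would oscillate
along this sequence; such a function on `X` does not extend to `B`.

In a compact Hausdorff space a `Gδ` point has a countable neighborhood basis, so no point of
`R = B ∖ υX` is a `Gδ` point of `B`. It is not one of `R` either, because `R` contains a `Gδ` set of
`B` around each of its points. Each of the three properties to be excluded would make `p` a `Gδ`
point of `R`.
-/

open Set TopologicalSpace

open Filter Topology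

lemma exists_set_frequently_mem_and_frequently_notMem_of_tendsto_atTop {α : Type*}
    {l : Filter α} [l.IsCountablyGenerated] [l.NeBot] {k : α → ℕ} (hk : Tendsto k l atTop) :
    ∃ S : Set ℕ, (∃ᶠ x in l, k x ∈ S) ∧ ∃ᶠ x in l, k x ∉ S := by
  obtain ⟨u, hu⟩ := l.exists_seq_tendsto
  obtain ⟨φ, hφ, hmono⟩ := strictMono_subseq_of_tendsto_atTop (hk.comp hu)
  have huφ : Tendsto (u ∘ φ) atTop l := hu.comp hφ.tendsto_atTop
  have hmem (n : ℕ) : k (u (φ n)) ∈ ((k ∘ u) ∘ φ) '' {m | Even m} ↔ Even n :=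
    hmono.injective.mem_set_image
  refine ⟨((k ∘ u) ∘ φ) '' {m | Even m}, huφ.frequently ?_, huφ.frequently ?_⟩
  · exact Nat.frequently_even.mono fun n hn ↦ (hmem n).2 hn
  · exact Nat.frequently_odd.mono fun n hn ↦ (hmem n).not.2 (Nat.not_even_iff_odd.2 hn)

section TopologicalSpace

variable {Y : Type*} [TopologicalSpace Y]

lemma exists_continuous_nat_of_iInter_clopen_eq_empty {V : ℕ → Set Y}
    (hV : ∀ n, IsClopen (V n)) (hempty : ⋂ n, V n = ∅) :
    ∃ k : Y → ℕ, Continuous k ∧ ∀ n y, n ≤ k y ↔ ∀ m < n, y ∈ V m := by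
  classical
  have hmiss (y : Y) : ∃ n, y ∉ V n := by
    simpa only [mem_iInter, not_forall] using eq_empty_iff_forall_notMem.1 hempty y
  refine ⟨fun y ↦ Nat.find (hmiss y), IsLocallyConstant.continuous ?_, fun n y ↦ ?_⟩
  · refine (IsLocallyConstant.iff_eventually_eq _).2 fun y ↦ ?_
    have hout : ∀ᶠ z in 𝓝 y, z ∉ V (Nat.find (hmiss y)) :=
      (hV _).compl.isOpen.mem_nhds (Nat.find_spec (hmiss y))
    have hin : ∀ᶠ z in 𝓝 y, ∀ m < Nat.find (hmiss y), z ∈ V m :=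
      (eventually_all_finite (finite_lt_nat _)).2 fun m hm ↦
        (hV m).isOpen.mem_nhds (not_not.1 (Nat.find_min (hmiss y) hm))
    filter_upwards [hout, hin] with z hz hzm
    exact (Nat.find_eq_iff _).2 ⟨hz, fun m hm ↦ not_not.2 (hzm m hm)⟩
  · simp only [Nat.le_find_iff, not_not]

lemma isGδ_singleton_of_isCountablyGenerated_nhds [T1Space Y] (y : Y)
    [(𝓝 y).IsCountablyGenerated] : IsGδ {y} := by
  obtain ⟨U, hU, hbasis⟩ := (nhds_basis_opens y).exists_antitone_subbasis
  rw [← biInter_basis_nhds hbasis.toHasBasis]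
  exact .biInter (to_countable _) fun n _ ↦ (hU n).2.isGδ

lemma isCountablyGenerated_nhds_of_isGδ_singleton [CompactSpace Y] [RegularSpace Y] {y : Y}
    (hy : IsGδ {y}) : (𝓝 y).IsCountablyGenerated := by
  obtain ⟨O, hO, hyO⟩ := isGδ_iff_eq_iInter_nat.1 hy
  have hclosed (n : ℕ) : ∃ W ∈ 𝓝 y, IsClosed W ∧ W ⊆ O n :=
    exists_mem_nhds_isClosed_subset ((hO n).mem_nhds (iInter_subset O n (hyO ▸ rfl)))
  choose W hW hWc hWO using hclosed
  -- By compactness it suffices that the filter generated by the `W n` clusters only at `y`.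
  have hle : ⨅ n, 𝓟 (W n) ≤ 𝓝 y := le_nhds_of_unique_clusterPt fun z hz ↦ by
    have hzW (n : ℕ) : z ∈ W n :=
      (hWc n).closure_subset (mem_closure_iff_clusterPt.2 (hz.mono (iInf_le _ n)))
    exact hyO.superset (mem_iInter.2 fun n ↦ hWO n (hzW n))
  exact isCountablyGenerated_of_seq ⟨W, (le_iInf fun n ↦ le_principal_iff.2 (hW n)).antisymm hle⟩

lemma exists_isGδ_preimage_eq_of_isInducing {Z : Type*} [TopologicalSpace Z] {f : Z → Y}
    (hf : IsInducing f) {T : Set Z} (hT : IsGδ T) : ∃ A : Set Y, IsGδ A ∧ f ⁻¹' A = T := by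
  obtain ⟨O, hO, rfl⟩ := isGδ_iff_eq_iInter_nat.1 hT
  choose A hA hAO using fun n ↦ hf.isOpen_iff.1 (hO n)
  exact ⟨⋂ n, A n, .iInter_of_isOpen hA, by simp only [preimage_iInter, hAO]⟩

lemma isGδ_image_val_of_subset {S Z : Set Y} {T : Set S} (hT : IsGδ T) (hZ : IsGδ Z)
    (hTZ : Subtype.val '' T ⊆ Z) (hZS : Z ⊆ S) : IsGδ (Subtype.val '' T) := by
  obtain ⟨A, hA, rfl⟩ := exists_isGδ_preimage_eq_of_isInducing .subtypeVal hT
  rw [Subtype.image_preimage_coe] at hTZ ⊢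
  have hSA : S ∩ A = Z ∩ A :=
    (subset_inter hTZ inter_subset_right).antisymm (inter_subset_inter_left A hZS)
  exact hSA ▸ hZ.inter hA

end TopologicalSpace

section Remainder

variable {B : Type*} [TopologicalSpace B] {X : Set B} {p : B}

lemma notMem_upsilon_iff : p ∉ upsilon X ↔
    ∃ V : ℕ → Set B, (∀ n, IsClopen (V n)) ∧ (∀ n, p ∈ V n) ∧ Disjoint (⋂ n, V n) X := by
  simp only [upsilon, mem_ofPred_eq, not_forall, forall_and, not_nonempty_iff_eq_empty,
    disjoint_iff_inter_eq_empty, exists_prop, and_assoc]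

lemma exists_continuous_nat_tendsto_atTop_of_notMem_upsilon (hp : p ∉ upsilon X) :
    ∃ k : X → ℕ, Continuous k ∧ Tendsto k (comap (↑) (𝓝 p)) atTop := by
  obtain ⟨V, hV, hpV, hVX⟩ := notMem_upsilon_iff.1 hp
  obtain ⟨k, hk, hle⟩ := exists_continuous_nat_of_iInter_clopen_eq_empty
    (V := fun n ↦ ((↑) : X → B) ⁻¹' V n) (fun n ↦ (hV n).preimage continuous_subtype_val) <| by
      rw [← preimage_iInter, Subtype.preimage_coe_eq_empty, inter_comm, hVX.inter_eq]
  refine ⟨k, hk, tendsto_atTop.2 fun n ↦ ?_⟩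
  have hnhds : ∀ᶠ q in 𝓝 p, ∀ m < n, q ∈ V m :=
    (eventually_all_finite (finite_lt_nat n)).2 fun m _ ↦ (hV m).isOpen.mem_nhds (hpV m)
  exact (hnhds.comap _).mono fun x hx ↦ (hle n x).2 hx

lemma exists_isGδ_mem_subset_compl_upsilon (hp : p ∉ upsilon X) :
    ∃ Z : Set B, IsGδ Z ∧ p ∈ Z ∧ Z ⊆ (upsilon X)ᶜ := by
  obtain ⟨V, hV, hpV, hVX⟩ := notMem_upsilon_iff.1 hp
  exact ⟨⋂ n, V n, .iInter_of_isOpen fun n ↦ (hV n).isOpen, mem_iInter.2 hpV,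
    fun _ hq ↦ notMem_upsilon_iff.2 ⟨V, hV, mem_iInter.1 hq, hVX⟩⟩

lemma not_isCountablyGenerated_nhds_of_notMem_upsilon (hd : Dense X)
    (hext : ∀ g : X → Bool, Continuous g → ∃ G : B → Bool, Continuous G ∧ ∀ x : X, G x = g x)
    (hp : p ∉ upsilon X) : ¬ (𝓝 p).IsCountablyGenerated := by
  classical
  intro _
  have : (comap ((↑) : X → B) (𝓝 p)).NeBot := mem_closure_iff_comap_neBot.1 (hd p)
  obtain ⟨k, hk, hktop⟩ := exists_continuous_nat_tendsto_atTop_of_notMem_upsilon hp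
  obtain ⟨S, hmem, hnotMem⟩ :=
    exists_set_frequently_mem_and_frequently_notMem_of_tendsto_atTop hktop
  obtain ⟨G, hG, hGk⟩ := hext (fun x ↦ decide (k x ∈ S))
    ((continuous_of_discreteTopology (f := fun n ↦ decide (n ∈ S))).comp hk)
  have hconst : ∀ᶠ x : X in comap (↑) (𝓝 p), G x = G p :=
    (hG.continuousAt.eventually ((isOpen_discrete {G p}).mem_nhds rfl)).comap _
  obtain ⟨x, hxS, hx⟩ := (hmem.and_eventually hconst).exists
  obtain ⟨y, hyS, hy⟩ := (hnotMem.and_eventually hconst).exists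
  have hxy : decide (k x ∈ S) = decide (k y ∈ S) := by rw [← hGk, ← hGk, hx, hy]
  exact hyS ((decide_eq_decide.1 hxy).1 hxS)

lemma not_isGδ_singleton_compl_upsilon [CompactSpace B] [RegularSpace B] (hd : Dense X)
    (hext : ∀ g : X → Bool, Continuous g → ∃ G : B → Bool, Continuous G ∧ ∀ x : X, G x = g x)
    (p : ((upsilon X)ᶜ : Set B)) : ¬ IsGδ {p} := by
  intro hp
  obtain ⟨Z, hZ, hpZ, hZR⟩ := exists_isGδ_mem_subset_compl_upsilon p.2
  have hpB : IsGδ {(p : B)} := by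
    rw [← image_singleton]
    exact isGδ_image_val_of_subset hp hZ (by rwa [image_singleton, singleton_subset_iff]) hZR
  exact not_isCountablyGenerated_nhds_of_notMem_upsilon hd hext p.2
    (isCountablyGenerated_nhds_of_isGδ_singleton hpB)

end Remainder

theorem stmt_13_general {B : Type*} [TopologicalSpace B] [CompactSpace B] [T2Space B]
    (X : Set B) (hd : Dense X)
    (hext : ∀ g : X → Bool, Continuous g → ∃ G : B → Bool, Continuous G ∧ ∀ x : X, G x = g x) :
    (∀ p : ((upsilon X)ᶜ : Set B),
        ¬ ∃ h : ((upsilon X)ᶜ : Set B) → ℝ, Continuous h ∧ h ⁻¹' {0} = {p}) ∧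
    (∀ p : ((upsilon X)ᶜ : Set B), ¬ IsOpen ({p} : Set ((upsilon X)ᶜ : Set B))) ∧
    (∀ p : ((upsilon X)ᶜ : Set B),
        ¬ ∃ V : ℕ → Set ((upsilon X)ᶜ : Set B),
          (∀ n, V n ∈ nhds p) ∧ ∀ s ∈ nhds p, ∃ n, V n ⊆ s) := by
  have hGδ := not_isGδ_singleton_compl_upsilon hd hext
  refine ⟨fun p ⟨h, hh, hzero⟩ ↦ hGδ p ?_, fun p hp ↦ hGδ p hp.isGδ, fun p ⟨V, hV, hbasis⟩ ↦ ?_⟩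
  · exact hzero ▸ isClosed_singleton.isGδ.preimage hh
  · have hVp : (𝓝 p).HasBasis (fun _ ↦ True) V := hasBasis_iff.2 fun s ↦
      ⟨fun hs ↦ by simpa only [true_and] using hbasis s hs,
        fun ⟨n, _, hn⟩ ↦ mem_of_superset (hV n) hn⟩
    have := hVp.isCountablyGenerated
    exact hGδ p (isGδ_singleton_of_isCountablyGenerated_nhds p)

/-- For a zero-dimensional non-pseudocompact `X`, in the remainder
`R = B ∖ υX` (with subspace topology):
(a) no singleton `{p}` is a zero-set of a continuous real function on `R`;
(b) `R` has no isolated points;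
(c) no point of `R` has a countable neighborhood basis. -/
theorem stmt_13 {B : Type*} [TopologicalSpace B] [CompactSpace B] [T2Space B]
    (hB : IsTopologicalBasis {s : Set B | IsClopen s})
    (X : Set B) (hd : Dense X)
    (hext : ∀ g : X → Bool, Continuous g → ∃ G : B → Bool, Continuous G ∧ ∀ x : X, G x = g x)
    (hnp : ¬ ∀ f : X → ℝ, Continuous f → ∃ M : ℝ, ∀ x, |f x| ≤ M) :
    (∀ p : ((upsilon X)ᶜ : Set B),
        ¬ ∃ h : ((upsilon X)ᶜ : Set B) → ℝ, Continuous h ∧ h ⁻¹' {0} = {p}) ∧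
    (∀ p : ((upsilon X)ᶜ : Set B), ¬ IsOpen ({p} : Set ((upsilon X)ᶜ : Set B))) ∧
    (∀ p : ((upsilon X)ᶜ : Set B),
        ¬ ∃ V : ℕ → Set ((upsilon X)ᶜ : Set B),
          (∀ n, V n ∈ nhds p) ∧ ∀ s ∈ nhds p, ∃ n, V n ⊆ s) :=
  stmt_13_general X hd hext
end
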